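/- arXiv:1211.5999 — 2 statements merged into one kernel-verified Lean document; each statement's English description precedes it below -/
import Mathlib

section
/- Let (A,s) be a symmetric k-algebra, U, V and W finitely generated A-modules, and π : P₀ → U a surjective A-module homomorphism with P₀ finitely generated projective; set Ω(U) = ker(π). Write T_V and T_W for the maps T associated with the pairs (U,V) and (U,W) respectively. Then for all A-module homomorphisms ζ : W → Ω(U), η : V → W and τ : U → V one has T_V(ζ ∘ η)(τ) = T_W(ζ)(η ∘ τ). (This is the degree-zero form of the compatibility of Tate duality with Yoneda products.) -/
universe u v w

/-- The map `λ_{α,v} : P → V`, `x ↦ α(x) • v`. -/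
def lambdaMap {A : Type u} [Ring A] {P : Type v} {V : Type w}
    [AddCommGroup P] [Module A P] [AddCommGroup V] [Module A V]
    (α : P →ₗ[A] A) (v : V) : P →ₗ[A] V where
  toFun x := α x • v
  map_add' x y := by simp [add_smul]
  map_smul' a x := by simp [mul_smul]

/-!
A finitely generated projective module `P` has a finite dual basis `x = ∑ i, α i x • e i`, so every
`f : P → V` equals `∑ i, λ_{α i, f (e i)}` (`exists_eq_sum_lambdaMap`). Expanding `τ ∘ π` this way
with `v i = τ (π (e i))`, the same `α i` give `η ∘ τ ∘ π = ∑ i, λ_{α i, η (v i)}`, and the defining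
property of the two forms turns both sides into `∑ i, s (α i (ζ (η (v i))))`.
-/

/-- Every homomorphism out of a finitely generated projective module is a finite sum of maps
`λ_{α,v}`, by the dual basis lemma. -/
theorem exists_eq_sum_lambdaMap {A : Type*} [Ring A] {P V : Type*}
    [AddCommGroup P] [Module A P] [AddCommGroup V] [Module A V]
    [Module.Finite A P] [Module.Projective A P] (f : P →ₗ[A] V) :
    ∃ (n : ℕ) (α : Fin n → P →ₗ[A] A) (v : Fin n → V), f = ∑ i, lambdaMap (α i) (v i) := by
  obtain ⟨n, g, hg⟩ := Module.Finite.exists_fin' A P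
  obtain ⟨h, hh⟩ := Module.projective_lifting_property g LinearMap.id hg
  refine ⟨n, fun i => (LinearMap.proj i).comp h, fun i => f (g (Pi.single i 1)), ?_⟩
  ext x
  have hx : g (h x) = x := LinearMap.congr_fun hh x
  conv_lhs => rw [← hx, pi_eq_sum_univ' (h x)]
  simp only [map_sum, map_smul, LinearMap.sum_apply]
  rfl

theorem comp_lambdaMap {A : Type*} [Ring A] {P V W : Type*}
    [AddCommGroup P] [Module A P] [AddCommGroup V] [Module A V] [AddCommGroup W] [Module A W]
    (η : V →ₗ[A] W) (α : P →ₗ[A] A) (v : V) :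
    η.comp (lambdaMap α v) = lambdaMap α (η v) := by
  ext x
  simp [lambdaMap]

/-- With `Ω(U) = ker π` and `T_X(β)(ψ) = B_{X,P₀}(ι ∘ β, ψ ∘ π)`, for
`ζ : W → Ω(U)`, `η : V → W` and `τ : U → V` one has `T_V(ζ ∘ η)(τ) = T_W(ζ)(η ∘ τ)`
(degree-zero compatibility of Tate duality with Yoneda products). -/
theorem tate_duality_yoneda_compat
    (k : Type*) [Field k] (A : Type*) [Ring A] [Algebra k A] [FiniteDimensional k A]
    (s : A →ₗ[k] k)
    (hs : ∀ a b : A, s (a * b) = s (b * a))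
    (hnd : ∀ a : A, (∀ b : A, s (a * b) = 0) → a = 0)
    (U V W : Type*)
    [AddCommGroup U] [Module k U] [Module A U] [IsScalarTower k A U] [Module.Finite A U]
    [AddCommGroup V] [Module k V] [Module A V] [IsScalarTower k A V] [Module.Finite A V]
    [AddCommGroup W] [Module k W] [Module A W] [IsScalarTower k A W] [Module.Finite A W]
    (P₀ : Type*) [AddCommGroup P₀] [Module k P₀] [Module A P₀] [IsScalarTower k A P₀]
    [Module.Finite A P₀] [Module.Projective A P₀]
    (π : P₀ →ₗ[A] U) (hπ : Function.Surjective π)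
    (BV : (V →ₗ[A] P₀) →ₗ[k] (P₀ →ₗ[A] V) →ₗ[k] k)
    (hBV : ∀ (β : V →ₗ[A] P₀) (α : P₀ →ₗ[A] A) (v : V),
      BV β (lambdaMap α v) = s (α (β v)))
    (BW : (W →ₗ[A] P₀) →ₗ[k] (P₀ →ₗ[A] W) →ₗ[k] k)
    (hBW : ∀ (β : W →ₗ[A] P₀) (α : P₀ →ₗ[A] A) (w : W),
      BW β (lambdaMap α w) = s (α (β w)))
    (ζ : W →ₗ[A] ↥(LinearMap.ker π)) (η : V →ₗ[A] W) (τ : U →ₗ[A] V) :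
    BV ((LinearMap.ker π).subtype.comp (ζ.comp η)) (τ.comp π)
      = BW ((LinearMap.ker π).subtype.comp ζ) ((η.comp τ).comp π) := by
  obtain ⟨n, α, v, h⟩ := exists_eq_sum_lambdaMap (τ.comp π)
  have h' : (η.comp τ).comp π = ∑ i, lambdaMap (α i) (η (v i)) := by
    rw [LinearMap.comp_assoc, h]
    ext x
    simp [← comp_lambdaMap]
  rw [h, h', map_sum, map_sum]
  simp [hBV, hBW]
end

section
/- Let (A,s) be a symmetric k-algebra, U, V and W finitely generated A-modules, and π : P₀ → U a surjective A-module homomorphism with P₀ finitely generated projective; set Ω(U) = ker(π). Let ζ : V → Ω(U) and η : W → V be A-module homomorphisms such that the composite ζ ∘ η : W → Ω(U) does not factor through a projective A-module. Then there exists an A-module homomorphism τ : U → W such that η ∘ τ : U → V does not factor through a projective A-module. (This is the instance (m,n) = (1,0) of Lemma 8.2 of the paper on products in negative Tate cohomology.) -/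
/-!
The proof is Tate duality made explicit. For `φ : Aⁿ → Aⁿ` put `t φ = ∑ i, s (φ(eᵢ)ᵢ)`; since `s` is
symmetric, `t (f ∘ g) = t (g ∘ f)` also for `f`, `g` between free modules of different ranks
(`symTrace_comm`). Since `s` is nondegenerate, `(g, θ) ↦ t (g ∘ θ)` is a perfect pairing between
`Hom(W, Aⁿ)` and `Hom(Aⁿ, W)` for `W` finitely generated.

Write `i : Ω(U) → P₀` for the inclusion, `P₀` as a retract `r ∘ j = 1` of `Aⁿ`, and let
`q : Aᵐ → Ω(U)` be onto. As `ζ ∘ η` does not factor through `q`, the map `j ∘ i ∘ ζ ∘ η` is not in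
`(j ∘ i ∘ q) ∘ Hom(W, Aᵐ)`, so duality (`exists_separating`) yields `θ : Aⁿ → W` with
`θ ∘ j ∘ i ∘ q = 0` and `t (j ∘ i ∘ ζ ∘ η ∘ θ) ≠ 0`. Then `θ ∘ j` kills `ker π`, so
`θ ∘ j = τ ∘ π` for some `τ : U → W`. If `η ∘ τ` factored through a projective module, it would be
`b ∘ a` with `b : Aˡ → V`, and cyclicity of `t` would give
`t (j ∘ i ∘ ζ ∘ η ∘ θ) = t (a ∘ π ∘ r ∘ j ∘ i ∘ ζ ∘ b) = 0`, because `π ∘ i = 0`.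
-/

universe u v w

/-- An `A`-module homomorphism factors through a projective `A`-module. -/
def FactorsThroughProjective (A : Type u) [Ring A] {U : Type v} {V : Type w}
    [AddCommGroup U] [Module A U] [AddCommGroup V] [Module A V]
    (f : U →ₗ[A] V) : Prop :=
  ∃ (Q : Type (max u v w)) (_ : AddCommGroup Q) (_ : Module A Q),
    Module.Projective A Q ∧ ∃ (g : U →ₗ[A] Q) (h : Q →ₗ[A] V), h.comp g = f

lemma FactorsThroughProjective.of_free {A : Type u} [Ring A] {U : Type v} {V : Type w}
    [AddCommGroup U] [Module A U] [AddCommGroup V] [Module A V] {m : ℕ}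
    (g : U →ₗ[A] (Fin m → A)) (h : (Fin m → A) →ₗ[A] V) :
    FactorsThroughProjective A (h ∘ₗ g) := by
  let e : ULift.{max v w} (Fin m → A) ≃ₗ[A] (Fin m → A) := ULift.moduleEquiv
  refine ⟨ULift.{max v w} (Fin m → A), inferInstance, inferInstance,
    Module.Projective.of_equiv e.symm, e.symm.toLinearMap ∘ₗ g, h ∘ₗ e.toLinearMap, ?_⟩
  ext x
  simp

section Duality

variable {k : Type*} [Field k] {A : Type*} [Ring A] [Algebra k A]

/-- The trace form on `End_A(Aⁿ)` induced by a linear form `s` on `A`: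
the sum of the values of `s` at the diagonal entries. -/
def symTrace (s : A →ₗ[k] k) {n : ℕ} (φ : (Fin n → A) →ₗ[A] (Fin n → A)) : k :=
  ∑ i, s (φ (Pi.single i 1) i)

lemma apply_eq_sum {n m : ℕ} (g : (Fin n → A) →ₗ[A] (Fin m → A)) (x : Fin n → A) (i : Fin m) :
    g x i = ∑ j, x j * g (Pi.single j 1) i := by
  conv_lhs => rw [pi_eq_sum_univ' x]
  simp [map_sum, Finset.sum_apply]

lemma symTrace_comm (s : A →ₗ[k] k) (hs : ∀ a b : A, s (a * b) = s (b * a)) {n m : ℕ}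
    (f : (Fin m → A) →ₗ[A] (Fin n → A)) (g : (Fin n → A) →ₗ[A] (Fin m → A)) :
    symTrace s (f ∘ₗ g) = symTrace s (g ∘ₗ f) := by
  simp only [symTrace, LinearMap.comp_apply]
  simp_rw [apply_eq_sum f (g _), apply_eq_sum g (f _), map_sum]
  rw [Finset.sum_comm]
  simp_rw [hs]

variable [FiniteDimensional k A]

/-- Every `k`-linear form on an `A`-module `W` is `s ∘ h` for some `A`-linear `h : W → A`. -/
lemma exists_hom_of_form (s : A →ₗ[k] k)
    (hs : ∀ a b : A, s (a * b) = s (b * a))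
    (hnd : ∀ a : A, (∀ b : A, s (a * b) = 0) → a = 0)
    {W : Type*} [AddCommGroup W] [Module A W] [Module k W] [IsScalarTower k A W]
    (φ : W →ₗ[k] k) : ∃ h : W →ₗ[A] A, ∀ w, s (h w) = φ w := by
  let B : A →ₗ[k] Module.Dual k A := (LinearMap.mul k A).compr₂ s
  have hB : ∀ a b, B a b = s (a * b) := fun _ _ => rfl
  have hinj : Function.Injective B := by
    rw [injective_iff_map_eq_zero]
    intro a ha
    exact hnd a fun b => by rw [← hB, ha]; rfl
  have hsurj : Function.Surjective B :=
    (LinearMap.injective_iff_surjective_of_finrank_eq_finrank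
      (Subspace.dual_finrank_eq (K := k) (V := A)).symm).1 hinj
  -- `h w` is the element of `A` representing the form `b ↦ φ (b • w)`.
  choose h hh using fun w : W => hsurj (φ ∘ₗ (LinearMap.toSpanSingleton A W w).restrictScalars k)
  have key : ∀ w b, s (h w * b) = φ (b • w) := fun w b => by
    rw [← hB, hh]; simp
  refine ⟨⟨⟨h, ?_⟩, ?_⟩, fun w => ?_⟩
  · intro x y
    apply hinj
    ext b
    simp [hB, key]
  · intro a x
    apply hinj
    ext b
    simp only [hB, key, RingHom.id_apply, smul_eq_mul]
    rw [mul_assoc, hs, mul_assoc, key, smul_smul]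
  · simpa using key w 1

/-- Duality between `Hom(W, Aⁿ)` and `Hom(Aⁿ, W)`: a map `f : W → Aⁿ` that does not factor
through `c : Aᵐ → Aⁿ` is detected by some `θ : Aⁿ → W` that annihilates `c`. -/
lemma exists_separating (s : A →ₗ[k] k)
    (hs : ∀ a b : A, s (a * b) = s (b * a))
    (hnd : ∀ a : A, (∀ b : A, s (a * b) = 0) → a = 0)
    {W : Type*} [AddCommGroup W] [Module A W] [Module.Finite A W]
    {n m : ℕ} (c : (Fin m → A) →ₗ[A] (Fin n → A)) (f : W →ₗ[A] (Fin n → A))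
    (hf : ∀ h : W →ₗ[A] (Fin m → A), c ∘ₗ h ≠ f) :
    ∃ θ : (Fin n → A) →ₗ[A] W, θ ∘ₗ c = 0 ∧ symTrace s (f ∘ₗ θ) ≠ 0 := by
  let : Module k W := Module.compHom W (algebraMap k A)
  have : IsScalarTower k A W := IsScalarTower.of_algebraMap_smul fun _ _ => rfl
  have : SMulCommClass A k W := IsScalarTower.to_smulCommClass'
  have : FiniteDimensional k W := Module.Finite.trans A W
  have : FiniteDimensional k (W →ₗ[A] (Fin n → A)) :=
    Module.Finite.of_injective (LinearMap.restrictScalarsₗ k A W (Fin n → A) k)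
      (LinearMap.restrictScalars_injective k)
  let S : Submodule k (W →ₗ[A] (Fin n → A)) :=
    { carrier := {g | ∃ h : W →ₗ[A] (Fin m → A), c ∘ₗ h = g}
      add_mem' := by
        rintro _ _ ⟨x, rfl⟩ ⟨y, rfl⟩
        exact ⟨x + y, LinearMap.comp_add _ _ _⟩
      zero_mem' := ⟨0, LinearMap.comp_zero _⟩
      smul_mem' := by
        rintro a _ ⟨x, rfl⟩
        refine ⟨a • x, ?_⟩
        ext w i
        simp [LinearMap.map_smul_of_tower] }
  have hfS : f ∉ S := fun ⟨h, hh⟩ => hf h hh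
  obtain ⟨l, hlf, hlS⟩ := Submodule.exists_le_ker_of_notMem hfS
  let T : (W →ₗ[A] (Fin n → A)) →ₗ[k] ((Fin n → A) →ₗ[A] W) →ₗ[k] k :=
    LinearMap.mk₂ k (fun g θ => symTrace s (g ∘ₗ θ))
      (by intros; simp [symTrace, Finset.sum_add_distrib])
      (by intros; simp [symTrace, Finset.mul_sum])
      (by intros; simp [symTrace, Finset.sum_add_distrib])
      (by intros; simp [symTrace, Finset.mul_sum, LinearMap.map_smul_of_tower])
  have hT : ∀ g θ, T g θ = symTrace s (g ∘ₗ θ) := fun _ _ => rfl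
  have hTinj : Function.Injective T := by
    rw [injective_iff_map_eq_zero]
    intro g hg
    ext w i
    refine hnd _ fun b => ?_
    -- Test `g` against the map sending `eᵢ` to `b • w` and the other basis vectors to `0`.
    have := congrArg (fun F => F ((LinearMap.toSpanSingleton A W (b • w)) ∘ₗ
      (LinearMap.proj i : (Fin n → A) →ₗ[A] A))) hg
    simp only [hT, symTrace] at this
    rw [Finset.sum_eq_single i] at this
    · rw [hs]; simpa using this
    · intro j _ hj
      simp [hj.symm]
    · simp
  have hTsurj : Function.Surjective T.flip := LinearMap.flip_surjective_iff₁.2 hTinj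
  obtain ⟨θ, hθ⟩ := hTsurj l
  have hθ' : ∀ g, symTrace s (g ∘ₗ θ) = l g := fun g => by rw [← hθ]; rfl
  refine ⟨θ, ?_, by rw [hθ']; exact hlf⟩
  have h0 : ∀ h : W →ₗ[A] (Fin m → A), symTrace s (h ∘ₗ (θ ∘ₗ c)) = 0 := fun h => by
    rw [← LinearMap.comp_assoc, ← symTrace_comm s hs, ← LinearMap.comp_assoc, hθ']
    exact hlS ⟨h, rfl⟩
  refine LinearMap.pi_ext' fun i => LinearMap.ext_ring ?_
  refine (Module.forall_dual_apply_eq_zero_iff k _).1 fun φ => ?_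
  obtain ⟨h, hh⟩ := exists_hom_of_form s hs hnd φ
  -- Test against `h` placed in the `i`-th coordinate.
  have := h0 (LinearMap.single A (fun _ => A) i ∘ₗ h)
  simp only [symTrace] at this
  rw [Finset.sum_eq_single i] at this
  · rw [← hh]; simpa using this
  · intro j _ hj
    simp [hj]
  · simp

end Duality

/-- For a symmetric `k`-algebra `(A,s)`, with `Ω(U) = ker π` for a
surjection `π : P₀ → U`, `P₀` finitely generated projective: if `ζ : V → Ω(U)` and
`η : W → V` are such that `ζ ∘ η` does not factor through a projective module, then there
is `τ : U → W` such that `η ∘ τ` does not factor through a projective module. -/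
theorem exists_tau_nonprojective_product
    (k : Type*) [Field k] (A : Type*) [Ring A] [Algebra k A] [FiniteDimensional k A]
    (s : A →ₗ[k] k)
    (hs : ∀ a b : A, s (a * b) = s (b * a))
    (hnd : ∀ a : A, (∀ b : A, s (a * b) = 0) → a = 0)
    (U V W : Type*) [AddCommGroup U] [Module A U] [Module.Finite A U]
    [AddCommGroup V] [Module A V] [Module.Finite A V]
    [AddCommGroup W] [Module A W] [Module.Finite A W]
    (P₀ : Type*) [AddCommGroup P₀] [Module A P₀]
    [Module.Finite A P₀] [Module.Projective A P₀]
    (π : P₀ →ₗ[A] U) (hπ : Function.Surjective π)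
    (ζ : V →ₗ[A] ↥(LinearMap.ker π)) (η : W →ₗ[A] V)
    (hζη : ¬ FactorsThroughProjective A (ζ.comp η)) :
    ∃ τ : U →ₗ[A] W, ¬ FactorsThroughProjective A (η.comp τ) := by
  have : IsNoetherianRing A := IsNoetherianRing.of_finite k A
  obtain ⟨n, r, j, -, -, hrj⟩ := Module.Finite.exists_comp_eq_id_of_projective A P₀
  obtain ⟨m, q, hq⟩ := Module.Finite.exists_fin' A (LinearMap.ker π)
  obtain ⟨l, p, hp⟩ := Module.Finite.exists_fin' A V
  have hrj' : ∀ x, r (j x) = x := fun x => LinearMap.congr_fun hrj x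
  let i : LinearMap.ker π →ₗ[A] P₀ := (LinearMap.ker π).subtype
  obtain ⟨θ, hθ, hne⟩ := exists_separating s hs hnd (j ∘ₗ i ∘ₗ q) (j ∘ₗ i ∘ₗ ζ ∘ₗ η) (by
    intro h hh
    apply hζη
    suffices ζ ∘ₗ η = q ∘ₗ h from this ▸ FactorsThroughProjective.of_free h q
    ext w
    have := congrArg r (LinearMap.congr_fun hh w)
    simpa [hrj', i] using this.symm)
  have hker : LinearMap.ker π ≤ LinearMap.ker (θ ∘ₗ j) := by
    intro x hx
    obtain ⟨y, hy⟩ := hq ⟨x, hx⟩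
    have := LinearMap.congr_fun hθ y
    simpa [hy, i] using this
  let τ : U →ₗ[A] W := (LinearMap.ker π).liftQ (θ ∘ₗ j) hker ∘ₗ
    (π.quotKerEquivOfSurjective hπ).symm.toLinearMap
  have hτ : ∀ x, τ (π x) = θ (j x) := by
    intro x
    have : (π.quotKerEquivOfSurjective hπ).symm (π x) = (LinearMap.ker π).mkQ x := by
      rw [LinearEquiv.symm_apply_eq]; rfl
    simp [τ, this]
  refine ⟨τ, ?_⟩
  rintro ⟨Q, _, _, hQ, a, b, hab⟩
  obtain ⟨b', hb'⟩ := Module.projective_lifting_property p b hp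
  apply hne
  -- The idempotent `j ∘ r` fixes the image of `j`; cyclicity moves it next to `θ`.
  have e1 : j ∘ₗ i ∘ₗ ζ ∘ₗ η = (j ∘ₗ r) ∘ₗ (j ∘ₗ i ∘ₗ ζ ∘ₗ η) := by
    ext w; simp [hrj']
  have e2 : ((j ∘ₗ i ∘ₗ ζ ∘ₗ η) ∘ₗ θ) ∘ₗ (j ∘ₗ r) =
      (j ∘ₗ i ∘ₗ ζ ∘ₗ p) ∘ₗ (b' ∘ₗ a ∘ₗ π ∘ₗ r) := by
    refine LinearMap.ext fun x => ?_
    have h1 : η (τ (π (r x))) = p (b' (a (π (r x)))) :=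
      (LinearMap.congr_fun hab (π (r x))).symm.trans (LinearMap.congr_fun hb' (a (π (r x)))).symm
    simp [← h1, hτ]
  have e3 : (b' ∘ₗ a ∘ₗ π ∘ₗ r) ∘ₗ (j ∘ₗ i ∘ₗ ζ ∘ₗ p) = 0 := by
    refine LinearMap.ext fun x => ?_
    have : π (ζ (p x) : P₀) = 0 := (ζ (p x)).2
    simp [hrj', i, this]
  rw [e1, LinearMap.comp_assoc, symTrace_comm s hs, e2, symTrace_comm s hs, e3]
  simp [symTrace]
end
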